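/- Let 𝒫 be a configuration of n points in general position in the plane, and let P, Q, R be three pairwise distinct points of 𝒫. If n(P,Q) ≢ n(Q,R) (mod 2), then n(P,R) ≡ n (mod 2). -/

import Mathlib

open scoped Classical

noncomputable section

/-- The set Pts is in general position: no three distinct points are collinear. -/
def GenPos (Pts : Finset (ℝ × ℝ)) : Prop :=
  ∀ A ∈ Pts, ∀ B ∈ Pts, ∀ C ∈ Pts, A ≠ B → A ≠ C → B ≠ C →
    ¬ Collinear ℝ ({A, B, C} : Set (ℝ × ℝ))

/-- `sepCount Pts P Q` is the number of unordered pairs `{R, S}` of points of `Pts \ {P, Q}`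
such that the line through `R` and `S` strictly separates `P` and `Q`. -/
def sepCount (Pts : Finset (ℝ × ℝ)) (P Q : ℝ × ℝ) : ℕ :=
  ((Finset.powersetCard 2 (Pts \ {P, Q})).filter
    (fun s => (affineSpan ℝ (↑s : Set (ℝ × ℝ))).SOppSide P Q)).card

/-- The vertices of the convex hull of `Pts` (its extreme points). -/
def hullVertices (Pts : Finset (ℝ × ℝ)) : Set (ℝ × ℝ) :=
  Set.extremePoints ℝ (convexHull ℝ (↑Pts : Set (ℝ × ℝ)))

/-- `Q : ZMod k → ℝ × ℝ` lists the points of `S` in convex position, in cyclic order: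
`Q` is an injective enumeration of `S` and, for every `i`, all points of `S` other than
`Q i` and `Q (i+1)` lie strictly on the same side of the line through `Q i` and `Q (i+1)`
(i.e. each consecutive pair spans an edge of the convex hull of `S`). -/
def IsConvexCycle (k : ℕ) (S : Set (ℝ × ℝ)) (Q : ZMod k → ℝ × ℝ) : Prop :=
  Function.Injective Q ∧ Set.range Q = S ∧
    ∀ i : ZMod k, ∀ x ∈ S, ∀ y ∈ S,
      x ∉ ({Q i, Q (i + 1)} : Set (ℝ × ℝ)) → y ∉ ({Q i, Q (i + 1)} : Set (ℝ × ℝ)) →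
        (affineSpan ℝ ({Q i, Q (i + 1)} : Set (ℝ × ℝ))).SSameSide x y

/-- Orientation determinant. -/
def odet (A B X : ℝ × ℝ) : ℝ := (B.1 - A.1) * (X.2 - A.2) - (B.2 - A.2) * (X.1 - A.1)

lemma mem_line_iff {A B : ℝ × ℝ} (hAB : A ≠ B) (X : ℝ × ℝ) :
    X ∈ affineSpan ℝ ({A, B} : Set (ℝ × ℝ)) ↔ odet A B X = 0 := by
  rw [mem_affineSpan_pair_iff_exists_lineMap_eq]
  constructor
  · rintro ⟨r, rfl⟩
    simp [odet, AffineMap.lineMap_apply]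
    ring
  · intro h
    unfold odet at h
    by_cases h1 : B.1 - A.1 = 0
    · have h2 : B.2 - A.2 ≠ 0 := by
        intro h2
        exact hAB (Prod.ext (by linarith) (by linarith))
      have h3 : X.1 - A.1 = 0 := by
        rw [h1] at h
        have : (B.2 - A.2) * (X.1 - A.1) = 0 := by linarith
        exact (mul_eq_zero.mp this).resolve_left h2
      refine ⟨(X.2 - A.2) / (B.2 - A.2), ?_⟩
      apply Prod.ext
      · simp [AffineMap.lineMap_apply, h1]; linarith
      · simp [AffineMap.lineMap_apply]; field_simp; ring
    · refine ⟨(X.1 - A.1) / (B.1 - A.1), ?_⟩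
      apply Prod.ext
      · simp [AffineMap.lineMap_apply]; field_simp; ring
      · simp [AffineMap.lineMap_apply]; field_simp; linarith

lemma sOppSide_iff_odet {A B : ℝ × ℝ} (hAB : A ≠ B) (X Y : ℝ × ℝ) :
    (affineSpan ℝ ({A, B} : Set (ℝ × ℝ))).SOppSide X Y ↔ odet A B X * odet A B Y < 0 := by
  have key : ∀ t : ℝ, odet A B (AffineMap.lineMap X Y t)
      = (1 - t) * odet A B X + t * odet A B Y := by
    intro t
    simp [odet, AffineMap.lineMap_apply]
    ring
  unfold AffineSubspace.SOppSide
  rw [AffineSubspace.wOppSide_iff_exists_wbtw, mem_line_iff hAB, mem_line_iff hAB]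
  constructor
  · rintro ⟨⟨p, hp, t, ⟨ht0, ht1⟩, rfl⟩, hx, hy⟩
    rw [mem_line_iff hAB, key] at hp
    set a := odet A B X
    set b := odet A B Y
    by_contra hc
    have hab : 0 < a * b := lt_of_le_of_ne (not_lt.mp hc) (Ne.symm (mul_ne_zero hx hy))
    have e1 : (1 - t) * (a * a) + t * (a * b) = 0 := by linear_combination a * hp
    have haa : 0 < a * a := mul_self_pos.mpr hx
    have n1 : 0 ≤ (1 - t) * (a * a) := mul_nonneg (by linarith) haa.le
    have n2 : 0 ≤ t * (a * b) := mul_nonneg ht0 hab.le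
    have z2 : t * (a * b) = 0 := by linarith
    have z1 : (1 - t) * (a * a) = 0 := by linarith
    have := (mul_eq_zero.mp z2).resolve_right hab.ne'
    have := (mul_eq_zero.mp z1).resolve_right haa.ne'
    linarith
  · intro h
    have hx : odet A B X ≠ 0 := by intro h0; rw [h0] at h; simp at h
    have hy : odet A B Y ≠ 0 := by intro h0; rw [h0] at h; simp at h
    refine ⟨?_, hx, hy⟩
    set a := odet A B X
    set b := odet A B Y
    have hne : a - b ≠ 0 := by
      intro h0
      have : a = b := by linarith
      rw [this] at h
      nlinarith [mul_self_nonneg b]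
    refine ⟨AffineMap.lineMap X Y (a / (a - b)), ?_, a / (a - b), ⟨?_, ?_⟩, rfl⟩
    · rw [mem_line_iff hAB, key]
      field_simp
      ring
    · rcases mul_neg_iff.mp h with ⟨h1, h2⟩ | ⟨h1, h2⟩
      · exact div_nonneg h1.le (by linarith)
      · exact div_nonneg_of_nonpos h1.le (by linarith)
    · rcases mul_neg_iff.mp h with ⟨h1, h2⟩ | ⟨h1, h2⟩
      · rw [div_le_one (by linarith)]; linarith
      · rw [div_le_one_of_neg (by linarith)]; linarith

lemma odet_ne_zero {Pts : Finset (ℝ × ℝ)} (hgen : GenPos Pts) {A B C : ℝ × ℝ}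
    (hA : A ∈ Pts) (hB : B ∈ Pts) (hC : C ∈ Pts) (hAB : A ≠ B) (hAC : A ≠ C) (hBC : B ≠ C) :
    odet A B C ≠ 0 := by
  intro h
  rw [← mem_line_iff hAB] at h
  apply hgen A hA B hB C hC hAB hAC hBC
  have := collinear_insert_of_mem_affineSpan_pair h
  have e : ({A, B, C} : Set (ℝ × ℝ)) = {C, A, B} := by
    ext x; simp; tauto
  rw [e]; exact this

/-- Indicator of separation. -/
def sepInd (s : Finset (ℝ × ℝ)) (X Y : ℝ × ℝ) : ℕ :=
  if (affineSpan ℝ (↑s : Set (ℝ × ℝ))).SOppSide X Y then 1 else 0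

lemma sepInd_pair {A B : ℝ × ℝ} (hAB : A ≠ B) (X Y : ℝ × ℝ) :
    sepInd {A, B} X Y = if odet A B X * odet A B Y < 0 then 1 else 0 := by
  unfold sepInd
  simp only [Finset.coe_insert, Finset.coe_singleton, sOppSide_iff_odet hAB]

lemma sum_powersetCard_two_insert (T : Finset (ℝ × ℝ)) (R : ℝ × ℝ) (hR : R ∉ T)
    (f : Finset (ℝ × ℝ) → ℕ) :
    ∑ s ∈ Finset.powersetCard 2 (insert R T), f s
      = ∑ s ∈ Finset.powersetCard 2 T, f s + ∑ S ∈ T, f {R, S} := by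
  rw [Finset.powersetCard_succ_insert hR, Finset.sum_union, Finset.sum_image]
  · rw [Finset.powersetCard_one, Finset.sum_map]
    rfl
  · intro a ha b hb hab
    rw [Finset.mem_coe, Finset.mem_powersetCard] at ha hb
    have h1 : R ∉ a := fun h => hR (ha.1 h)
    have h2 : R ∉ b := fun h => hR (hb.1 h)
    rw [← Finset.erase_insert h1, ← Finset.erase_insert h2]
    exact congrArg (fun s => s.erase R) hab
  · rw [Finset.disjoint_left]
    intro s hs hs'
    obtain ⟨u, -, rfl⟩ := Finset.mem_image.mp hs'
    exact hR ((Finset.mem_powersetCard.mp hs).1 (Finset.mem_insert_self _ _))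

lemma sepCount_eq (Pts T : Finset (ℝ × ℝ)) (X Y Z : ℝ × ℝ) (hZ : Z ∉ T)
    (hT : Pts \ {X, Y} = insert Z T) :
    sepCount Pts X Y = ∑ s ∈ Finset.powersetCard 2 T, sepInd s X Y
      + ∑ S ∈ T, sepInd {Z, S} X Y := by
  unfold sepCount
  rw [hT, Finset.card_filter, ← sum_powersetCard_two_insert T Z hZ (fun s => sepInd s X Y)]
  have e : (do
      let a ← Finset.powersetCard 2 (insert Z T)
      pure (↑a : Set (ℝ × ℝ)) : Finset (Set (ℝ × ℝ)))
      = (Finset.powersetCard 2 (insert Z T)).image (fun a : Finset (ℝ × ℝ) => (↑a : Set (ℝ × ℝ))) := by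
    ext x
    simp [Finset.bind_def, Finset.pure_def, Finset.mem_sup, eq_comm]
  rw [e, Finset.sum_image (fun a _ b _ hab => Finset.coe_injective hab)]
  rfl

lemma three_even {a b c : ℝ} (ha : a ≠ 0) (hb : b ≠ 0) (hc : c ≠ 0) :
    (((if a * b < 0 then 1 else 0) + (if b * c < 0 then 1 else 0)
      + (if a * c < 0 then 1 else 0) : ℕ) : ZMod 2) = 0 := by
  have h2 : (2 : ZMod 2) = 0 := by decide
  have h3 : (3 : ZMod 2) = 1 := by decide
  rcases lt_or_gt_of_ne ha with ha | ha <;> rcases lt_or_gt_of_ne hb with hb | hb <;>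
    rcases lt_or_gt_of_ne hc with hc | hc <;>
    simp [mul_neg_iff, ha, hb, hc, ha.not_gt, hb.not_gt, hc.not_gt, h2, h3]

lemma three_odd {a b c : ℝ} (ha : a ≠ 0) (hb : b ≠ 0) (hc : c ≠ 0) :
    (((if 0 < a * b then 1 else 0) + (if 0 < b * c then 1 else 0)
      + (if 0 < a * c then 1 else 0) : ℕ) : ZMod 2) = 1 := by
  have h2 : (2 : ZMod 2) = 0 := by decide
  have h3 : (3 : ZMod 2) = 1 := by decide
  rcases lt_or_gt_of_ne ha with ha | ha <;> rcases lt_or_gt_of_ne hb with hb | hb <;>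
    rcases lt_or_gt_of_ne hc with hc | hc <;>
    simp [mul_pos_iff, ha, hb, hc, ha.not_gt, hb.not_gt, hc.not_gt, h2, h3]

lemma sepCount_sum (Pts : Finset (ℝ × ℝ)) (hgen : GenPos Pts)
    (P Q R : ℝ × ℝ) (hP : P ∈ Pts) (hQ : Q ∈ Pts) (hR : R ∈ Pts)
    (hPQ : P ≠ Q) (hPR : P ≠ R) (hQR : Q ≠ R) :
    ((sepCount Pts P Q + sepCount Pts Q R + sepCount Pts P R : ℕ) : ZMod 2)
      = (Pts.card : ZMod 2) + 1 := by
  set T := Pts \ {P, Q, R} with hT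
  have hTm : ∀ S ∈ T, S ∈ Pts ∧ S ≠ P ∧ S ≠ Q ∧ S ≠ R := by
    intro S hS
    simpa [hT] using hS
  have hPT : P ∉ T := by simp [hT]
  have hQT : Q ∉ T := by simp [hT]
  have hRT : R ∉ T := by simp [hT]
  have e1 : Pts \ {P, Q} = insert R T := by
    ext x; simp only [hT, Finset.mem_sdiff, Finset.mem_insert, Finset.mem_singleton]; grind
  have e2 : Pts \ {Q, R} = insert P T := by
    ext x; simp only [hT, Finset.mem_sdiff, Finset.mem_insert, Finset.mem_singleton]; grind
  have e3 : Pts \ {P, R} = insert Q T := by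
    ext x; simp only [hT, Finset.mem_sdiff, Finset.mem_insert, Finset.mem_singleton]; grind
  have hcard : Pts.card = T.card + 3 := by
    have h3 : ({P, Q, R} : Finset (ℝ × ℝ)).card = 3 := Finset.card_eq_three.mpr
      ⟨P, Q, R, hPQ, hPR, hQR, rfl⟩
    have hsub : ({P, Q, R} : Finset (ℝ × ℝ)) ⊆ Pts := by
      intro x hx
      simp only [Finset.mem_insert, Finset.mem_singleton] at hx
      rcases hx with rfl | rfl | rfl <;> assumption
    have := Finset.card_sdiff_add_card_eq_card hsub
    rw [← hT, h3] at this
    omega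
  have A : ((∑ s ∈ Finset.powersetCard 2 T,
      (sepInd s P Q + sepInd s Q R + sepInd s P R) : ℕ) : ZMod 2) = 0 := by
    rw [Nat.cast_sum]
    apply Finset.sum_eq_zero
    intro s hs
    obtain ⟨hsT, hs2⟩ := Finset.mem_powersetCard.mp hs
    obtain ⟨U, V, hUV, rfl⟩ := Finset.card_eq_two.mp hs2
    obtain ⟨hU, hUP, hUQ, hUR⟩ := hTm U (hsT (by simp))
    obtain ⟨hV, hVP, hVQ, hVR⟩ := hTm V (hsT (by simp))
    rw [sepInd_pair hUV, sepInd_pair hUV, sepInd_pair hUV]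
    exact three_even (odet_ne_zero hgen hU hV hP hUV hUP hVP)
      (odet_ne_zero hgen hU hV hQ hUV hUQ hVQ) (odet_ne_zero hgen hU hV hR hUV hUR hVR)
  have B : ((∑ S ∈ T,
      (sepInd {R, S} P Q + sepInd {P, S} Q R + sepInd {Q, S} P R) : ℕ) : ZMod 2)
      = (T.card : ZMod 2) := by
    rw [Nat.cast_sum, Finset.cast_card]
    apply Finset.sum_congr rfl
    intro S hS
    obtain ⟨hS', hSP, hSQ, hSR⟩ := hTm S hS
    rw [sepInd_pair hSR.symm, sepInd_pair hSP.symm, sepInd_pair hSQ.symm]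
    have ha := odet_ne_zero hgen hS' hQ hR hSQ hSR hQR
    have hb := odet_ne_zero hgen hS' hR hP hSR hSP hPR.symm
    have hc := odet_ne_zero hgen hS' hP hQ hSP hSQ hPQ
    have q1 : odet R S P * odet R S Q = - (odet S Q R * odet S R P) := by unfold odet; ring
    have q2 : odet P S Q * odet P S R = - (odet S R P * odet S P Q) := by unfold odet; ring
    have q3 : odet Q S P * odet Q S R = - (odet S Q R * odet S P Q) := by unfold odet; ring
    rw [q1, q2, q3]
    simp only [neg_lt_zero]
    exact three_odd ha hb hc
  rw [sepCount_eq Pts T P Q R hRT e1, sepCount_eq Pts T Q R P hPT e2,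
    sepCount_eq Pts T P R Q hQT e3, hcard]
  simp only [Finset.sum_add_distrib] at A B
  push_cast at A B ⊢
  have h4 : (4 : ZMod 2) = 0 := by decide
  linear_combination A + B - h4

/-- If `n(P,Q) ≢ n(Q,R) (mod 2)` for three pairwise distinct points `P`, `Q`, `R` of a
configuration of `n` points in general position, then `n(P,R) ≡ n (mod 2)`. -/
theorem sepCount_modeq_of_not_modeq (n : ℕ) (Pts : Finset (ℝ × ℝ))
    (hgen : GenPos Pts) (hcard : Pts.card = n)
    (P Q R : ℝ × ℝ) (hP : P ∈ Pts) (hQ : Q ∈ Pts) (hR : R ∈ Pts)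
    (hPQ : P ≠ Q) (hPR : P ≠ R) (hQR : Q ≠ R)
    (h : ¬ (sepCount Pts P Q ≡ sepCount Pts Q R [MOD 2])) :
    sepCount Pts P R ≡ n [MOD 2] := by
  have hs := sepCount_sum Pts hgen P Q R hP hQ hR hPQ hPR hQR
  rw [hcard, ← Nat.cast_one, ← Nat.cast_add, ZMod.natCast_eq_natCast_iff] at hs
  unfold Nat.ModEq at *
  omega

end
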